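/- For every sign string S and state string J for S, any two complete executions of the growth algorithm from (S,J) have the same web tensor; i.e., the web tensor in V^S is independent of the order in which growth rules are applied. -/

import Mathlib

/-!
The growth rules have the diamond property, compatibly with the tensors they produce: if two
different rules apply to the same string, one further rule on each side leads to a common string,
and the two composite linear maps agree (`rstep_diamond`). For rules at disjoint positions this is
the commutation of maps acting on different tensor factors (`op_disjoint`). Rules at overlapping
positions involve three consecutive points with states `(1,0,0)`, `(0,0,0)`, `(1,0,-1)` or
`(0,0,-1)`; by signs there are four kinds of overlap (`red_overlap`), and in each of them the two
composites are the same planar trivalent graph, so the corresponding identities between the tensors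
`b`, `t` and `H` hold (`ker_HY`, `ker_YU`, `ker_YY_left`, `ker_YY_right`, checked on coordinates).

Since a single step closes each side, induction on an execution shows that any applicable rule can be
moved to the front of it without changing the web tensor (`IsWeb.exchange`). Moving the first rule of
one execution to the front of the other and recursing proves that the tensors agree
(`IsWeb.unique`); no existence of executions (dominance of the path) is needed.
-/

noncomputable section

/-- The ground field `K = ℚ(v)`. -/
abbrev K : Type := RatFunc ℚ

/-- The indeterminate `v`. -/
def v : K := RatFunc.X

/-- The three states `-1, 0, 1`. -/
inductive St where
  | neg : St
  | zero : St
  | pos : St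
deriving DecidableEq

instance : Fintype St where
  elems := {St.neg, St.zero, St.pos}
  complete := fun x => by cases x <;> simp

/-- The integer value of a state. -/
def stval : St → ℤ
  | .neg => -1
  | .zero => 0
  | .pos => 1

/-- The order `-1 < 0 < 1` on states. -/
def stLt (a b : St) : Prop := stval a < stval b

/-- The weight `μ(s, j) ∈ ℤ²`; `true` is the sign `+`, `false` is `-`. -/
def wt : Bool → St → ℤ × ℤ
  | true, .pos => (1, 0)
  | true, .zero => (-1, 1)
  | true, .neg => (0, -1)
  | false, .pos => (0, 1)
  | false, .zero => (1, -1)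
  | false, .neg => (-1, 0)

/-- Total weight `Σ μ(s_k, j_k)` of a sign string and a state string. -/
def wtSum (S : List Bool) (J : List St) : ℤ × ℤ :=
  ((S.zip J).map fun p => wt p.1 p.2).sum

/-- A state string is dominant if its lattice path stays in the dominant
Weyl chamber and returns to the origin. -/
def Dominant (S : List Bool) (J : List St) : Prop :=
  J.length = S.length ∧
  (∀ k : ℕ, 0 ≤ (wtSum (S.take k) (J.take k)).1 ∧ 0 ≤ (wtSum (S.take k) (J.take k)).2) ∧
  wtSum S J = 0

/-- Coefficients of `b^{+-}(1) ∈ V⁺ ⊗ V⁻`. -/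
def bCpm : St → St → K
  | .pos, .neg => 1
  | .zero, .zero => v⁻¹
  | .neg, .pos => v⁻¹ ^ 2
  | _, _ => 0

/-- Coefficients of `b^{-+}(1) ∈ V⁻ ⊗ V⁺`. -/
def bCmp : St → St → K
  | .pos, .neg => 1
  | .zero, .zero => v⁻¹
  | .neg, .pos => v⁻¹ ^ 2
  | _, _ => 0

/-- Matrix entries of `σ_{+-} : V⁺ ⊗ V⁻ → K`. -/
def sCpm : St → St → K
  | .neg, .pos => 1
  | .zero, .zero => v
  | .pos, .neg => v ^ 2
  | _, _ => 0

/-- Matrix entries of `σ_{-+} : V⁻ ⊗ V⁺ → K`. -/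
def sCmp : St → St → K
  | .neg, .pos => 1
  | .zero, .zero => v
  | .pos, .neg => v ^ 2
  | _, _ => 0

/-- `tYpp a b c` is the coefficient of `e_a ⊗ e_b` in `t^{++}_-(e_c)`. -/
def tYpp : St → St → St → K
  | .pos, .zero, .pos => 1
  | .zero, .pos, .pos => v⁻¹
  | .pos, .neg, .zero => 1
  | .neg, .pos, .zero => v⁻¹
  | .zero, .neg, .neg => 1
  | .neg, .zero, .neg => v⁻¹
  | _, _, _ => 0

/-- `tYmm a b c` is the coefficient of `e_a ⊗ e_b` in `t^{--}_+(e_c)`. -/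
def tYmm : St → St → St → K
  | .pos, .zero, .pos => 1
  | .zero, .pos, .pos => v⁻¹
  | .pos, .neg, .zero => 1
  | .neg, .pos, .zero => v⁻¹
  | .zero, .neg, .neg => 1
  | .neg, .zero, .neg => v⁻¹
  | _, _, _ => 0

/-- `tLpp a b c` is the coefficient of `e_c` in `t^-_{++}(e_a ⊗ e_b)`. -/
def tLpp : St → St → St → K
  | .pos, .zero, .pos => v
  | .zero, .pos, .pos => 1
  | .pos, .neg, .zero => v
  | .neg, .pos, .zero => 1
  | .zero, .neg, .neg => v
  | .neg, .zero, .neg => 1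
  | _, _, _ => 0

/-- `tLmm a b c` is the coefficient of `e_c` in `t^+_{--}(e_a ⊗ e_b)`. -/
def tLmm : St → St → St → K
  | .pos, .zero, .pos => v
  | .zero, .pos, .pos => 1
  | .pos, .neg, .zero => v
  | .neg, .pos, .zero => 1
  | .zero, .neg, .neg => v
  | .neg, .zero, .neg => 1
  | _, _, _ => 0

/-- Matrix entries of the H-map
`(id_{V⁺} ⊗ t^-_{++}) ∘ (t^{++}_- ⊗ id_{V⁺}) : V⁻ ⊗ V⁺ → V⁺ ⊗ V⁻`:
`HCpm a b c d` is the coefficient of `e_a ⊗ e_b` in the image of `e_c ⊗ e_d`. -/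
def HCpm (a b c d : St) : K := ∑ y : St, tYpp a y c * tLpp y d b

/-- Matrix entries of the H-map
`(t^-_{++} ⊗ id_{V⁺}) ∘ (id_{V⁺} ⊗ t^{++}_-) : V⁺ ⊗ V⁻ → V⁻ ⊗ V⁺`:
`HCmp a b c d` is the coefficient of `e_a ⊗ e_b` in the image of `e_c ⊗ e_d`. -/
def HCmp (a b c d : St) : K := ∑ x : St, tLpp c x a * tYpp x b d

/-- State patterns of the three H-rules: `(j_k, j_{k+1})` on top, the
replacement below. -/
inductive HPat : St → St → St → St → Prop where
  | h1 : HPat .pos .zero .zero .pos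
  | h2 : HPat .zero .zero .neg .pos
  | h3 : HPat .zero .neg .neg .zero

/-- State patterns of the three Y-rules. -/
inductive YPat : St → St → St → Prop where
  | y1 : YPat .pos .zero .pos
  | y2 : YPat .pos .neg .zero
  | y3 : YPat .zero .neg .neg

/-- One application of a growth rule, rewriting `(S, J)` to `(S', J')`. -/
inductive Step : List Bool → List St → List Bool → List St → Prop where
  | hstep (A B : List Bool) (P Q : List St) (s1 s2 : Bool) (j1 j2 j1' j2' : St)
      (hl : A.length = P.length) (hs : s1 ≠ s2) (hp : HPat j1 j2 j1' j2') :
      Step (A ++ s1 :: s2 :: B) (P ++ j1 :: j2 :: Q)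
        (A ++ (!s1) :: (!s2) :: B) (P ++ j1' :: j2' :: Q)
  | ustep (A B : List Bool) (P Q : List St) (s1 s2 : Bool)
      (hl : A.length = P.length) (hs : s1 ≠ s2) :
      Step (A ++ s1 :: s2 :: B) (P ++ St.pos :: St.neg :: Q) (A ++ B) (P ++ Q)
  | ystep (A B : List Bool) (P Q : List St) (s : Bool) (j1 j2 j' : St)
      (hl : A.length = P.length) (hp : YPat j1 j2 j') :
      Step (A ++ s :: s :: B) (P ++ j1 :: j2 :: Q) (A ++ (!s) :: B) (P ++ j' :: Q)

/-- A complete execution of the growth algorithm from `(S, J)` down to the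
pair of empty strings. -/
inductive Exec : List Bool → List St → Type where
  | nil : Exec [] []
  | hstep (A B : List Bool) (P Q : List St) (s1 s2 : Bool) (j1 j2 j1' j2' : St)
      (hl : A.length = P.length) (hs : s1 ≠ s2) (hp : HPat j1 j2 j1' j2')
      (e : Exec (A ++ (!s1) :: (!s2) :: B) (P ++ j1' :: j2' :: Q)) :
      Exec (A ++ s1 :: s2 :: B) (P ++ j1 :: j2 :: Q)
  | ustep (A B : List Bool) (P Q : List St) (s1 s2 : Bool)
      (hl : A.length = P.length) (hs : s1 ≠ s2)
      (e : Exec (A ++ B) (P ++ Q)) :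
      Exec (A ++ s1 :: s2 :: B) (P ++ St.pos :: St.neg :: Q)
  | ystep (A B : List Bool) (P Q : List St) (s : Bool) (j1 j2 j' : St)
      (hl : A.length = P.length) (hp : YPat j1 j2 j')
      (e : Exec (A ++ (!s) :: B) (P ++ j' :: Q)) :
      Exec (A ++ s :: s :: B) (P ++ j1 :: j2 :: Q)

/-- The web tensor of an execution, as coordinates with respect to the basis
`e^S_J` of `V^S`: `web e L` is the coefficient of `e^S_L`. -/
def web : {S : List Bool} → {J : List St} → Exec S J → List St → K
  | _, _, .nil, L => if L = [] then 1 else 0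
  | _, _, .hstep A _ _ _ s1 _ _ _ _ _ _ _ _ e, L =>
      match L.drop A.length with
      | a :: b :: R =>
          ∑ c : St, ∑ d : St,
            (if s1 then HCpm a b c d else HCmp a b c d) *
              web e (L.take A.length ++ c :: d :: R)
      | _ => 0
  | _, _, .ustep A _ _ _ s1 _ _ _ e, L =>
      match L.drop A.length with
      | a :: b :: R => (if s1 then bCpm a b else bCmp a b) * web e (L.take A.length ++ R)
      | _ => 0
  | _, _, .ystep A _ _ _ s _ _ _ _ _ e, L =>
      match L.drop A.length with
      | a :: b :: R =>
          ∑ c : St, (if s then tYpp a b c else tYmm a b c) * web e (L.take A.length ++ c :: R)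
      | _ => 0

/-- `c ∈ v⁻¹ ℤ[v⁻¹]`: a polynomial in `v⁻¹` with zero constant term. -/
def ZeroConst (c : K) : Prop :=
  ∃ p : Polynomial ℤ, p.coeff 0 = 0 ∧ c = Polynomial.aeval v⁻¹ p

/-- `x` has the negative-exponent property relative to a state string `J`
(`n` is the length of the ambient sign string). -/
def NegExpProp (n : ℕ) (x : List St → K) (J : List St) : Prop :=
  x J = 1 ∧ ∀ J' : List St, J'.length = n → J' ≠ J → ZeroConst (x J')

/-- `c ∈ ℕ[v, v⁻¹]`: a Laurent polynomial with nonnegative integer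
coefficients. -/
def IsNatLaurent (c : K) : Prop :=
  ∃ (p : Polynomial ℕ) (m : ℕ), c = v⁻¹ ^ m * Polynomial.aeval v p

/-- `c ∈ ℤ[v⁻¹]`. -/
def InZInv (c : K) : Prop := ∃ p : Polynomial ℤ, c = Polynomial.aeval v⁻¹ p

/-- Property P: all coefficients lie in `ℤ[v⁻¹]` and at most one of them has a
nonzero constant term. -/
def PropP (n : ℕ) (x : List St → K) : Prop :=
  (∀ J : List St, J.length = n → InZInv (x J)) ∧
  ∀ J1 J2 : List St, J1.length = n → J2.length = n →
    ¬ ZeroConst (x J1) → ¬ ZeroConst (x J2) → J1 = J2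

/-- The sign string `(+,+,−,−,+,+,−,−,+,+,−,−)`. -/
def base : List Bool :=
  [true, true, false, false, true, true, false, false, true, true, false, false]


/-! ### Growth steps on strings of sign-state pairs -/

/-- A boundary point carrying a sign and a state. -/
abbrev Pt : Type := Bool × St

/-- The growth rule for two adjacent points: the string replacing them, or `none` if no rule
applies. A pair of points admits at most one rule, so this is a (partial) function. -/
def red : Pt → Pt → Option (List Pt)
  | (s, .pos), (t, .zero) =>
      if s = t then some [(!s, .pos)] else some [(!s, .zero), (!t, .pos)]
  | (s, .zero), (t, .zero) => if s = t then none else some [(!s, .neg), (!t, .pos)]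
  | (s, .zero), (t, .neg) =>
      if s = t then some [(!s, .neg)] else some [(!s, .neg), (!t, .zero)]
  | (s, .pos), (t, .neg) => if s = t then some [(!s, .zero)] else some []
  | _, _ => none

/-- Matrix entries of the map attached to a growth rule whose first sign is `s`: the coefficient
of `e_a ⊗ e_b` in the image of `e_w`. The length of `w` tells the kind of rule: `0` for U, `1` for Y
and `2` for H. -/
def ker (s : Bool) (a b : St) : List St → K
  | [] => if s then bCpm a b else bCmp a b
  | [c] => if s then tYpp a b c else tYmm a b c
  | [c, d] => if s then HCpm a b c d else HCmp a b c d
  | _ => 0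

/-- The sum of `φ w` over all state strings `w` of length `k`. -/
def wsum : ℕ → (List St → K) → K
  | 0, φ => φ []
  | k + 1, φ => ∑ c : St, wsum k fun w => φ (c :: w)

/-- The map `id^{⊗n} ⊗ g ⊗ id` on coordinate functions, where `g` is attached to the rule with
first sign `s` that has `k` output points. -/
def op (n : ℕ) (s : Bool) (k : ℕ) (f : List St → K) (L : List St) : K :=
  match L.drop n with
  | a :: b :: R => wsum k fun w => ker s a b w * f (L.take n ++ (w ++ R))
  | _ => 0

/-- `RStep X Y g`: one growth step rewrites `X` to `Y`, and `g` is the map it induces from tensors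
over `Y` to tensors over `X`. -/
inductive RStep : List Pt → List Pt → ((List St → K) → List St → K) → Prop where
  | mk (A B : List Pt) (p q : Pt) (T : List Pt) (h : red p q = some T) :
      RStep (A ++ p :: q :: B) (A ++ (T ++ B)) (op A.length p.1 T.length)

/-- `IsWeb X f`: `f` is the web tensor of some complete execution from `X`. -/
inductive IsWeb : List Pt → (List St → K) → Prop where
  | nil : IsWeb [] fun L => if L = [] then 1 else 0
  | step {X Y : List Pt} {g : (List St → K) → List St → K} {f : List St → K}
      (h : RStep X Y g) (hf : IsWeb Y f) : IsWeb X (g f)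

lemma isWeb_web {S : List Bool} {J : List St} (e : Exec S J) : IsWeb (S.zip J) (web e) := by
  induction e with
  | nil =>
    have : web Exec.nil = fun L => if L = [] then 1 else 0 := by funext L; rw [web]
    rw [this]; exact .nil
  | hstep A B P Q s1 s2 j1 j2 j1' j2' hl hs hp e ih =>
    have hw : web (.hstep A B P Q s1 s2 j1 j2 j1' j2' hl hs hp e)
        = op (A.zip P).length s1 2 (web e) := by
      funext L
      rw [web, op, List.length_zip, ← hl, min_self]
      rcases L.drop A.length with _ | ⟨a, _ | ⟨b, R⟩⟩ <;> simp [wsum, ker]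
    rw [List.zip_append hl] at ih ⊢
    rw [hw]
    refine .step (Y := A.zip P ++ ([(!s1, j1'), (!s2, j2')] ++ B.zip Q)) ?_ (by simpa using ih)
    exact RStep.mk (A.zip P) (B.zip Q) (s1, j1) (s2, j2) [(!s1, j1'), (!s2, j2')]
      (by cases hp <;> simp [red, hs])
  | ustep A B P Q s1 s2 hl hs e ih =>
    have hw : web (.ustep A B P Q s1 s2 hl hs e) = op (A.zip P).length s1 0 (web e) := by
      funext L
      rw [web, op, List.length_zip, ← hl, min_self]
      rcases L.drop A.length with _ | ⟨a, _ | ⟨b, R⟩⟩ <;> simp [wsum, ker]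
    rw [List.zip_append hl] at ih ⊢
    rw [hw]
    refine .step (Y := A.zip P ++ ([] ++ B.zip Q)) ?_ (by simpa using ih)
    exact RStep.mk (A.zip P) (B.zip Q) (s1, .pos) (s2, .neg) [] (by simp [red, hs])
  | ystep A B P Q s j1 j2 j' hl hp e ih =>
    have hw : web (.ystep A B P Q s j1 j2 j' hl hp e) = op (A.zip P).length s 1 (web e) := by
      funext L
      rw [web, op, List.length_zip, ← hl, min_self]
      rcases L.drop A.length with _ | ⟨a, _ | ⟨b, R⟩⟩ <;> simp [wsum, ker]
    rw [List.zip_append hl] at ih ⊢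
    rw [hw]
    refine .step (Y := A.zip P ++ ([(!s, j')] ++ B.zip Q)) ?_ (by simpa using ih)
    exact RStep.mk (A.zip P) (B.zip Q) (s, j1) (s, j2) [(!s, j')] (by cases hp <;> simp [red])

/-! ### Calculus of the operators `op` -/

lemma wsum_congr (k : ℕ) {φ ψ : List St → K} (h : ∀ w, w.length = k → φ w = ψ w) :
    wsum k φ = wsum k ψ := by
  induction k generalizing φ ψ with
  | zero => exact h [] rfl
  | succ k ih =>
    exact Finset.sum_congr rfl fun c _ => ih fun w hw => h (c :: w) (by simp [hw])

lemma wsum_zero (k : ℕ) : wsum k (fun _ => 0) = 0 := by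
  induction k with
  | zero => rfl
  | succ k ih => simp [wsum, ih]

lemma mul_wsum (k : ℕ) (x : K) (φ : List St → K) : x * wsum k φ = wsum k fun w => x * φ w := by
  induction k generalizing φ with
  | zero => rfl
  | succ k ih => simp [wsum, Finset.mul_sum, ih]

lemma wsum_sum (k : ℕ) (φ : St → List St → K) :
    wsum k (fun w => ∑ c, φ c w) = ∑ c, wsum k (φ c) := by
  induction k generalizing φ with
  | zero => rfl
  | succ k ih => simp only [wsum, ih]; exact Finset.sum_comm

lemma wsum_comm (k l : ℕ) (φ : List St → List St → K) :
    wsum k (fun w => wsum l fun u => φ w u) = wsum l fun u => wsum k fun w => φ w u := by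
  induction k generalizing φ with
  | zero => rfl
  | succ k ih => simp only [wsum, ih, wsum_sum]

lemma op_append {n : ℕ} (s : Bool) (k : ℕ) (f : List St → K) (P : List St) (a b : St)
    (R : List St) (hP : P.length = n) :
    op n s k f (P ++ a :: b :: R) = wsum k fun w => ker s a b w * f (P ++ (w ++ R)) := by
  subst hP
  simp [op]

lemma op_short {n : ℕ} (s : Bool) (k : ℕ) (f : List St → K) {L : List St}
    (h : L.length < n + 2) : op n s k f L = 0 := by
  have h' : (L.drop n).length < 2 := by rw [List.length_drop]; omega
  rw [op]
  rcases hd : L.drop n with _ | ⟨a, _ | ⟨b, R⟩⟩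
  · rfl
  · rfl
  · rw [hd] at h'; simp at h'

lemma exists_split2 {n : ℕ} {L : List St} (h : n + 2 ≤ L.length) :
    ∃ P a b R, P.length = n ∧ L = P ++ a :: b :: R := by
  rcases hd : L.drop n with _ | ⟨a, _ | ⟨b, R⟩⟩
  · have := congrArg List.length hd; simp at this; omega
  · have := congrArg List.length hd; simp at this; omega
  · refine ⟨L.take n, a, b, R, by simp; omega, ?_⟩
    rw [← hd, List.take_append_drop]

lemma exists_split3 {n : ℕ} {L : List St} (h : n + 3 ≤ L.length) :
    ∃ P a b c R, P.length = n ∧ L = P ++ a :: b :: c :: R := by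
  obtain ⟨P, a, b, R, hP, rfl⟩ := exists_split2 (n := n) (L := L) (by omega)
  rcases R with _ | ⟨c, R⟩
  · simp at h; omega
  · exact ⟨P, a, b, c, R, hP, rfl⟩

/-- A composite of two operators vanishes on strings too short for the inner one. -/
lemma op_op_short {n m : ℕ} (s t : Bool) (k l : ℕ) (f : List St → K) {L : List St}
    (h : L.length + k < m + 4) : op n s k (op m t l f) L = 0 := by
  by_cases hL : L.length < n + 2
  · exact op_short _ _ _ hL
  · obtain ⟨P, a, b, R, hP, rfl⟩ := exists_split2 (n := n) (L := L) (by omega)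
    rw [op_append _ _ _ _ _ _ _ hP, ← wsum_zero k]
    refine wsum_congr k fun w hw => ?_
    rw [op_short, mul_zero]
    simp at h ⊢; omega

/-- Growth rules at disjoint positions act on different tensor factors, hence commute. -/
lemma op_disjoint (n m : ℕ) (s t : Bool) (k l : ℕ) (f : List St → K) :
    op n s k (op (n + k + m) t l f) = op (n + 2 + m) t l (op n s k f) := by
  funext L
  by_cases hL : L.length < n + 2 + m + 2
  · rw [op_op_short _ _ _ _ _ (by omega), op_short _ _ _ hL]
  obtain ⟨M, a', b', R, hM, rfl⟩ := exists_split2 (n := n + 2 + m) (L := L) (by omega)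
  obtain ⟨P, a, b, C, hP, rfl⟩ := exists_split2 (n := n) (L := M) (by omega)
  have hC : C.length = m := by simp at hM; omega
  rw [op_append _ _ _ _ _ _ _ hM]
  have e1 : (P ++ a :: b :: C) ++ a' :: b' :: R = P ++ a :: b :: (C ++ a' :: b' :: R) := by simp
  rw [e1, op_append _ _ _ _ _ _ _ hP]
  have e2 : wsum k (fun w => ker s a b w * op (n + k + m) t l f (P ++ (w ++ (C ++ a' :: b' :: R))))
      = wsum k fun w => wsum l fun u =>
        ker s a b w * (ker t a' b' u * f (P ++ (w ++ (C ++ (u ++ R))))) := by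
    refine wsum_congr k fun w hw => ?_
    have : P ++ (w ++ (C ++ a' :: b' :: R)) = (P ++ (w ++ C)) ++ a' :: b' :: R := by simp
    rw [this, op_append _ _ _ _ _ _ _ (by simp; omega), mul_wsum]
    simp
  rw [e2, wsum_comm]
  refine wsum_congr l fun u hu => ?_
  have : (P ++ a :: b :: C) ++ (u ++ R) = P ++ a :: b :: (C ++ (u ++ R)) := by simp
  rw [this, op_append _ _ _ _ _ _ _ hP, mul_wsum]
  exact wsum_congr k fun w hw => by ring

/-! ### The overlap identities between the tensors `b`, `t` and `H` -/

lemma v_ne_zero : v ≠ 0 := RatFunc.X_ne_zero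

lemma sum_St (φ : St → K) : ∑ c, φ c = φ .neg + (φ .zero + φ .pos) := by
  simp [Finset.univ, Fintype.elems]

/-- Overlap of two H-rules, signs `(s, -s, s)`. -/
lemma ker_HY (s : Bool) (a b c x z : St) :
    ∑ y, ker s a b [x, y] * ker s y c [z] = ∑ y, ker (!s) b c [y, z] * ker s a y [x] := by
  have hv := v_ne_zero
  cases s <;> simp only [ker, HCpm, HCmp, sum_St, Bool.not_true, Bool.not_false, if_true,
      Bool.false_eq_true, if_false] <;>
    cases a <;> cases b <;> cases c <;> cases x <;> cases z <;>
    simp [tYpp, tYmm, tLpp, hv]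

/-- Overlap of two Y-rules, signs `(s, s, s)`. -/
lemma ker_YU (s : Bool) (a b c : St) :
    ∑ x, ker s a b [x] * ker (!s) x c [] = ∑ x, ker s b c [x] * ker s a x [] := by
  have hv := v_ne_zero
  cases s <;> simp only [ker, sum_St, Bool.not_true, Bool.not_false, if_true,
      Bool.false_eq_true, if_false] <;>
    cases a <;> cases b <;> cases c <;>
    simp [tYpp, tYmm, bCpm, bCmp] <;> field_simp

/-- Overlap of a Y-rule with an H-rule to its right, signs `(s, s, -s)`. -/
lemma ker_YY_left (s : Bool) (a b c z : St) :
    ∑ x, ker s a b [x] * ker (!s) x c [z] = ∑ x, ker s b c [x, z] * ker s a x [] := by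
  have hv := v_ne_zero
  cases s <;> simp only [ker, HCpm, HCmp, sum_St, Bool.not_true, Bool.not_false, if_true,
      Bool.false_eq_true, if_false] <;>
    cases a <;> cases b <;> cases c <;> cases z <;>
    simp [tYpp, tYmm, tLpp, bCpm, bCmp, hv] <;> field_simp

/-- Overlap of an H-rule with a Y-rule to its right, signs `(s, -s, -s)`. -/
lemma ker_YY_right (s : Bool) (a b c z : St) :
    ∑ x, ker s a b [z, x] * ker s x c [] = ∑ x, ker (!s) b c [x] * ker s a x [z] := by
  have hv := v_ne_zero
  cases s <;> simp only [ker, HCpm, HCmp, sum_St, Bool.not_true, Bool.not_false, if_true,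
      Bool.false_eq_true, if_false] <;>
    cases a <;> cases b <;> cases c <;> cases z <;>
    simp [tYpp, tYmm, tLpp, bCpm, bCmp, hv] <;> field_simp

lemma op_HY (n : ℕ) (s : Bool) (f : List St → K) :
    op n s 2 (op (n + 1) s 1 f) = op (n + 1) (!s) 2 (op n s 1 f) := by
  funext L
  by_cases hL : L.length < n + 3
  · rw [op_op_short _ _ _ _ _ (by omega), op_short _ _ _ (by omega)]
  obtain ⟨P, a, b, c, R, hP, rfl⟩ := exists_split3 (n := n) (L := L) (by omega)
  have hP1 (x : St) : (P ++ [x]).length = n + 1 := by simp [hP]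
  have hl (x y : St) := op_append s 1 f (P ++ [x]) y c R (hP1 x)
  have hr := op_append (!s) 2 (op n s 1 f) (P ++ [a]) b c R (hP1 a)
  simp only [List.append_assoc, List.singleton_append] at hl hr
  rw [op_append _ _ _ _ _ _ _ hP, hr]
  simp only [wsum, List.cons_append, List.nil_append, hl, op_append _ _ _ _ _ _ _ hP,
    Finset.mul_sum, ← mul_assoc]
  have key (x z : St) : ∑ y, ker s a b [x, y] * ker s y c [z] * f (P ++ x :: z :: R)
      = ∑ y, ker (!s) b c [y, z] * ker s a y [x] * f (P ++ x :: z :: R) := by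
    rw [← Finset.sum_mul, ← Finset.sum_mul, ker_HY]
  calc _ = ∑ x, ∑ z, ∑ y, ker s a b [x, y] * ker s y c [z] * f (P ++ x :: z :: R) :=
        Finset.sum_congr rfl fun x _ => Finset.sum_comm
    _ = ∑ x, ∑ z, ∑ y, ker (!s) b c [y, z] * ker s a y [x] * f (P ++ x :: z :: R) := by
        simp only [key]
    _ = ∑ z, ∑ x, ∑ y, ker (!s) b c [y, z] * ker s a y [x] * f (P ++ x :: z :: R) :=
        Finset.sum_comm
    _ = ∑ z, ∑ y, ∑ x, ker (!s) b c [y, z] * ker s a y [x] * f (P ++ x :: z :: R) :=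
        Finset.sum_congr rfl fun z _ => Finset.sum_comm
    _ = _ := Finset.sum_comm

lemma op_YU (n : ℕ) (s : Bool) (f : List St → K) :
    op n s 1 (op n (!s) 0 f) = op (n + 1) s 1 (op n s 0 f) := by
  funext L
  by_cases hL : L.length < n + 3
  · rw [op_op_short _ _ _ _ _ (by omega), op_short _ _ _ (by omega)]
  obtain ⟨P, a, b, c, R, hP, rfl⟩ := exists_split3 (n := n) (L := L) (by omega)
  have hr := op_append (n := n + 1) s 1 (op n s 0 f) (P ++ [a]) b c R (by simp [hP])
  simp only [List.append_assoc, List.singleton_append] at hr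
  rw [op_append _ _ _ _ _ _ _ hP, hr]
  simp only [wsum, List.cons_append, List.nil_append, op_append _ _ _ _ _ _ _ hP, ← mul_assoc]
  rw [← Finset.sum_mul, ← Finset.sum_mul, ker_YU]

lemma op_YY_left (n : ℕ) (s : Bool) (f : List St → K) :
    op n s 1 (op n (!s) 1 f) = op (n + 1) s 2 (op n s 0 f) := by
  funext L
  by_cases hL : L.length < n + 3
  · rw [op_op_short _ _ _ _ _ (by omega), op_short _ _ _ (by omega)]
  obtain ⟨P, a, b, c, R, hP, rfl⟩ := exists_split3 (n := n) (L := L) (by omega)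
  have hr := op_append (n := n + 1) s 2 (op n s 0 f) (P ++ [a]) b c R (by simp [hP])
  simp only [List.append_assoc, List.singleton_append] at hr
  rw [op_append _ _ _ _ _ _ _ hP, hr]
  simp only [wsum, List.cons_append, List.nil_append, op_append _ _ _ _ _ _ _ hP,
    Finset.mul_sum, ← mul_assoc]
  rw [Finset.sum_comm]
  conv_rhs => rw [Finset.sum_comm]
  refine Finset.sum_congr rfl fun z _ => ?_
  rw [← Finset.sum_mul, ← Finset.sum_mul, ker_YY_left]

lemma op_YY_right (n : ℕ) (s : Bool) (f : List St → K) :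
    op n s 2 (op (n + 1) s 0 f) = op (n + 1) (!s) 1 (op n s 1 f) := by
  funext L
  by_cases hL : L.length < n + 3
  · rw [op_op_short _ _ _ _ _ (by omega), op_short _ _ _ (by omega)]
  obtain ⟨P, a, b, c, R, hP, rfl⟩ := exists_split3 (n := n) (L := L) (by omega)
  have hP1 (x : St) : (P ++ [x]).length = n + 1 := by simp [hP]
  have hl (x y : St) := op_append s 0 f (P ++ [x]) y c R (hP1 x)
  have hr := op_append (!s) 1 (op n s 1 f) (P ++ [a]) b c R (hP1 a)
  simp only [List.append_assoc, List.singleton_append] at hl hr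
  rw [op_append _ _ _ _ _ _ _ hP, hr]
  simp only [wsum, List.cons_append, List.nil_append, hl, op_append _ _ _ _ _ _ _ hP,
    Finset.mul_sum, ← mul_assoc]
  conv_rhs => rw [Finset.sum_comm]
  refine Finset.sum_congr rfl fun z _ => ?_
  rw [← Finset.sum_mul, ← Finset.sum_mul, ker_YY_right]

/-! ### The diamond property -/

/-- The overlapping pairs of growth rules on three consecutive points `p, q, r`. In every case one
further rule on each side leads back to a common string. -/
lemma red_overlap {p q r : Pt} {T T' : List Pt} (h : red p q = some T) (h' : red q r = some T') :
    (∃ x y y' z, T = [x, y] ∧ T' = [y', z] ∧ red y r = some [z] ∧ red p y' = some [x] ∧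
      q.1 = !p.1 ∧ y.1 = p.1) ∨
    (∃ x y, T = [x] ∧ T' = [y] ∧ red x r = some [] ∧ red p y = some [] ∧
      q.1 = p.1 ∧ x.1 = !p.1) ∨
    (∃ x y z, T = [x] ∧ T' = [y, z] ∧ red x r = some [z] ∧ red p y = some [] ∧
      q.1 = p.1 ∧ x.1 = !p.1) ∨
    (∃ x y z, T = [z, x] ∧ T' = [y] ∧ red x r = some [] ∧ red p y = some [z] ∧
      q.1 = !p.1 ∧ x.1 = p.1) := by
  obtain ⟨s, i⟩ := p
  obtain ⟨t, j⟩ := q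
  obtain ⟨u, k⟩ := r
  cases i <;> cases j <;> simp only [red, reduceCtorEq] at h <;>
    cases k <;> simp only [red, reduceCtorEq] at h' <;>
    cases s <;> cases t <;> cases u <;> simp at h h' <;> subst h <;> subst h' <;> simp [red]

/-- Two growth steps either coincide or can be joined by one further step each, with equal
composite maps. -/
def Joinable (Y Y' : List Pt) (g g' : (List St → K) → List St → K) : Prop :=
  (Y = Y' ∧ g = g') ∨ ∃ Z h h', RStep Y Z h ∧ RStep Y' Z h' ∧ ∀ f, g (h f) = g' (h' f)

lemma Joinable.symm {Y Y' : List Pt} {g g' : (List St → K) → List St → K}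
    (h : Joinable Y Y' g g') : Joinable Y' Y g' g := by
  rcases h with ⟨h1, h2⟩ | ⟨Z, k, k', h1, h2, h3⟩
  · exact .inl ⟨h1.symm, h2.symm⟩
  · exact .inr ⟨Z, k', k, h2, h1, fun f => (h3 f).symm⟩

/-- `RStep.mk` with the shape of the strings left to a side condition. -/
lemma RStep.mk' (A B : List Pt) (p q : Pt) (T : List Pt) (h : red p q = some T) {X Y : List Pt}
    {n : ℕ} {s : Bool} (hX : X = A ++ p :: q :: B) (hY : Y = A ++ (T ++ B)) (hn : n = A.length)
    (hs : s = p.1) : RStep X Y (op n s T.length) := by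
  subst hX hY hn hs
  exact .mk A B p q T h

/-- The diamond property when the second step happens at, or to the right of, the first. -/
lemma joinable_of_le (A C B B' : List Pt) (p q p' q' : Pt) (T T' : List Pt)
    (h : red p q = some T) (h' : red p' q' = some T') (hX : p :: q :: B = C ++ p' :: q' :: B') :
    Joinable (A ++ (T ++ B)) (A ++ C ++ (T' ++ B'))
      (op A.length p.1 T.length) (op (A ++ C).length p'.1 T'.length) := by
  rcases C with _ | ⟨c, _ | ⟨d, C⟩⟩
  · simp only [List.nil_append, List.cons.injEq] at hX
    obtain ⟨rfl, rfl, rfl⟩ := hX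
    rw [h] at h'
    obtain rfl := Option.some.inj h'
    left; simp
  · simp only [List.cons_append, List.nil_append, List.cons.injEq] at hX
    obtain ⟨rfl, rfl, rfl⟩ := hX
    right
    rcases red_overlap h h' with ⟨x, y, y', z, rfl, rfl, h1, h2, e1, e2⟩ |
      ⟨x, y, rfl, rfl, h1, h2, e1, e2⟩ | ⟨x, y, z, rfl, rfl, h1, h2, e1, e2⟩ |
      ⟨x, y, z, rfl, rfl, h1, h2, e1, e2⟩
    · refine ⟨A ++ x :: z :: B', _, _,
        RStep.mk' (n := A.length + 1) (s := p.1) (A ++ [x]) B' y q' [z] h1 (by simp) (by simp)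
          (by simp) e2.symm,
        RStep.mk' (n := A.length) (s := p.1) A (z :: B') p y' [x] h2 (by simp) (by simp) rfl rfl,
        fun f => ?_⟩
      rw [e1]
      simpa using op_HY A.length p.1 f
    · refine ⟨A ++ B', _, _,
        RStep.mk' (n := A.length) (s := !p.1) A B' x q' [] h1 (by simp) (by simp)
          (by simp) e2.symm,
        RStep.mk' (n := A.length) (s := p.1) A B' p y [] h2 (by simp) (by simp) rfl rfl,
        fun f => ?_⟩
      rw [e1]
      simpa using op_YU A.length p.1 f
    · refine ⟨A ++ z :: B', _, _,
        RStep.mk' (n := A.length) (s := !p.1) A B' x q' [z] h1 (by simp) (by simp)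
          (by simp) e2.symm,
        RStep.mk' (n := A.length) (s := p.1) A (z :: B') p y [] h2 (by simp) (by simp) rfl rfl,
        fun f => ?_⟩
      rw [e1]
      simpa using op_YY_left A.length p.1 f
    · refine ⟨A ++ z :: B', _, _,
        RStep.mk' (n := A.length + 1) (s := p.1) (A ++ [z]) B' x q' [] h1 (by simp) (by simp)
          (by simp) e2.symm,
        RStep.mk' (n := A.length) (s := p.1) A B' p y [z] h2 (by simp) (by simp) rfl rfl,
        fun f => ?_⟩
      rw [e1]
      simpa using op_YY_right A.length p.1 f
  · simp only [List.cons_append, List.cons.injEq] at hX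
    obtain ⟨rfl, rfl, rfl⟩ := hX
    right
    refine ⟨A ++ (T ++ (C ++ (T' ++ B'))), _, _,
      RStep.mk' (n := A.length + T.length + C.length) (s := p'.1) (A ++ T ++ C) B' p' q' T' h'
        (by simp) (by simp) (by simp [add_assoc]) rfl,
      RStep.mk' (n := A.length) (s := p.1) A (C ++ (T' ++ B')) p q T h (by simp) (by simp) rfl rfl,
      fun f => ?_⟩
    have : (A ++ p :: q :: C).length = A.length + 2 + C.length := by simp; omega
    rw [this]
    exact op_disjoint _ _ _ _ _ _ f

lemma rstep_diamond {X Y Y' : List Pt} {g g' : (List St → K) → List St → K}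
    (h : RStep X Y g) (h' : RStep X Y' g') : Joinable Y Y' g g' := by
  obtain ⟨A, B, p, q, T, hT⟩ := h
  generalize hX : A ++ p :: q :: B = X at h'
  obtain ⟨A', B', p', q', T', hT'⟩ := h'
  rcases List.append_eq_append_iff.1 hX with ⟨C, rfl, hC⟩ | ⟨C, rfl, hC⟩
  · exact joinable_of_le A C B B' p q p' q' T T' hT hT' hC
  · exact (joinable_of_le A' C B' B p' q' p q T' T hT' hT hC).symm

lemma not_rstep_nil {Y : List Pt} {g : (List St → K) → List St → K} : ¬ RStep [] Y g := by
  intro h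
  generalize hX : ([] : List Pt) = X at h
  obtain ⟨A, B, p, q, T, hT⟩ := h
  simp at hX

/-- Any growth step can be taken as the first one without changing the web tensor. -/
lemma IsWeb.exchange {X : List Pt} {f : List St → K} (hf : IsWeb X f) :
    ∀ {Y g}, RStep X Y g → ∃ f', IsWeb Y f' ∧ f = g f' := by
  induction hf with
  | nil => exact fun h => absurd h not_rstep_nil
  | step ht hf ih =>
    intro Y g hs
    rcases rstep_diamond ht hs with ⟨rfl, rfl⟩ | ⟨Z, k, k', h1, h2, h3⟩
    · exact ⟨_, hf, rfl⟩
    · obtain ⟨f', hf', rfl⟩ := ih h1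
      exact ⟨k' f', .step h2 hf', h3 f'⟩

lemma IsWeb.unique {X : List Pt} {f f' : List St → K} (hf : IsWeb X f) (hf' : IsWeb X f') :
    f = f' := by
  induction hf generalizing f' with
  | nil =>
    generalize hX : ([] : List Pt) = X at hf'
    cases hf' with
    | nil => rfl
    | step h _ => subst hX; exact absurd h not_rstep_nil
  | step h hf ih =>
    obtain ⟨f'', h1, rfl⟩ := hf'.exchange h
    rw [ih h1]

/-- the web tensor does not depend on the order in which the
growth rules are applied. -/
theorem web_well_defined (S : List Bool) (J : List St) (e₁ e₂ : Exec S J) :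
    web e₁ = web e₂ := by
  exact (isWeb_web e₁).unique (isWeb_web e₂)

end
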